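/- Let m, r, d be integers with d ≥ 1 and 2 ≤ 2r ≤ m−1, and let d₁, …, d_r be integers with d ≥ dᵢ ≥ d/2 for all i. Then every matrix polynomial in A(d₁, …, d_r) is the coefficientwise limit of a sequence of matrix polynomials in A(⌈d/2⌉, …, ⌈d/2⌉); that is, A(d₁, …, d_r) is contained in the closure of A(⌈d/2⌉, …, ⌈d/2⌉). -/

import Mathlib

open Polynomial Matrix

/-- The degree of the `j`-th column of a matrix polynomial: the maximum of the degrees
of its entries. -/
noncomputable def colDegree {m k : ℕ} (L : Matrix (Fin m) (Fin k) (Polynomial ℂ))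
    (j : Fin k) : ℕ :=
  Finset.univ.sup fun i => (L i j).natDegree

/-- The 2r×2r matrix `J₂ᵣ = [[0, Δᵣ], [−Δᵣ, 0]]`, where `Δᵣ` is the r×r anti-identity. -/
noncomputable def Jmat (r : ℕ) : Matrix (Fin (2 * r)) (Fin (2 * r)) (Polynomial ℂ) :=
  Matrix.of fun i j =>
    if (i : ℕ) + (j : ℕ) + 1 = 2 * r ∧ (i : ℕ) < r then 1
    else if (i : ℕ) + (j : ℕ) + 1 = 2 * r ∧ (j : ℕ) < r then -1
    else 0

/-- The set `A(d₁, …, d_r)`: m×m matrix polynomials of the form `L J₂ᵣ Lᵀ`, where the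
`i`-th column of `L` has degree exactly `dᵢ` and the `(2r−i+1)`-th column has degree
exactly `d − dᵢ`, for `i = 1, …, r`. -/
noncomputable def Aset (m r d : ℕ) (ds : Fin r → ℕ) :
    Set (Matrix (Fin m) (Fin m) (Polynomial ℂ)) :=
  {P | ∃ L : Matrix (Fin m) (Fin (2 * r)) (Polynomial ℂ),
    (∀ i : Fin r,
      colDegree L (Fin.castLE (by omega) i) = ds i ∧
      colDegree L (Fin.castLE (by omega) i).rev = d - ds i) ∧
    P = L * Jmat r * Lᵀ}

/-- The tuple of coefficient matrices of a matrix polynomial of grade `d`. -/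
noncomputable def coeffTuple (m d : ℕ) (P : Matrix (Fin m) (Fin m) (Polynomial ℂ)) :
    Fin (d + 1) → Matrix (Fin m) (Fin m) ℂ :=
  fun i => Matrix.of fun a b => (P a b).coeff (i : ℕ)

namespace AuxA

noncomputable def W {m : ℕ} (u v : Fin m → Polynomial ℂ) :
    Matrix (Fin m) (Fin m) (Polynomial ℂ) :=
  Matrix.of fun a b => u a * v b - v a * u b

noncomputable def cd {m : ℕ} (u : Fin m → Polynomial ℂ) : ℕ :=
  Finset.univ.sup fun i => (u i).natDegree

lemma cd_le {m : ℕ} (u : Fin m → Polynomial ℂ) (a : ℕ) :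
    cd u ≤ a ↔ ∀ i, (u i).natDegree ≤ a := by
  simp [cd, Finset.sup_le_iff]

def S (m d a b : ℕ) : Set (Fin (d + 1) → Matrix (Fin m) (Fin m) ℂ) :=
  {x | ∃ u v : Fin m → Polynomial ℂ, cd u ≤ a ∧ cd v ≤ b ∧ x = coeffTuple m d (W u v)}

def E (m d a b : ℕ) : Set (Fin (d + 1) → Matrix (Fin m) (Fin m) ℂ) :=
  {x | ∃ u v : Fin m → Polynomial ℂ, cd u = a ∧ cd v = b ∧ x = coeffTuple m d (W u v)}

lemma step (m d a b : ℕ) (hab : b ≤ a) : S m d (a + 1) b ⊆ closure (S m d a (b + 1)) := by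
  rintro x ⟨u, v, hu, hv, rfl⟩
  rw [cd_le] at hu hv
  let w : Fin m → Polynomial ℂ := fun i => X ^ (b + 1) * C ((u i).coeff (a + 1))
  have ht : Filter.Tendsto (fun ε : ℂ => coeffTuple m d (W u v) + ε • coeffTuple m d (W u w))
      (nhdsWithin 0 {0}ᶜ) (nhds (coeffTuple m d (W u v))) := by
    refine Filter.Tendsto.mono_left ?_ nhdsWithin_le_nhds
    refine Continuous.tendsto' (by fun_prop) _ _ (by simp)
  refine mem_closure_of_tendsto ht ?_
  filter_upwards [self_mem_nhdsWithin] with ε hε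
  have hε : ε ≠ 0 := hε
  refine ⟨fun i => u i - C ε⁻¹ * (X ^ (a - b) * (v i + C ε * w i)), fun i => v i + C ε * w i,
    ?_, ?_, ?_⟩
  · rw [cd_le]
    intro i
    rw [Polynomial.natDegree_le_iff_coeff_eq_zero]
    intro N hN
    obtain ⟨k, rfl⟩ : ∃ k, N = k + b + 1 + (a - b) := ⟨N - (b + 1 + (a - b)), by omega⟩
    have h2 : (v i).coeff (k + b + 1) = 0 :=
      Polynomial.coeff_eq_zero_of_natDegree_lt (by have := hv i; omega)
    simp only [coeff_sub, coeff_C_mul, coeff_X_pow_mul, coeff_add, h2, w, coeff_mul_C, coeff_X_pow]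
    rcases Nat.eq_zero_or_pos k with rfl | hk
    · have : 0 + b + 1 + (a - b) = a + 1 := by omega
      rw [this]
      simp [hε]
    · have h1 : (u i).coeff (k + b + 1 + (a - b)) = 0 :=
        Polynomial.coeff_eq_zero_of_natDegree_lt (by have := hu i; omega)
      rw [h1, if_neg (by omega)]
      simp
  · rw [cd_le]
    intro i
    refine Polynomial.natDegree_add_le_of_degree_le ((hv i).trans (by omega)) ?_
    refine (natDegree_C_mul_le _ _).trans ?_
    refine (natDegree_mul_C_le _ _).trans ?_
    simp
  · have key : ∀ p q, W (fun i => u i - C ε⁻¹ * (X ^ (a - b) * (v i + C ε * w i)))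
        (fun i => v i + C ε * w i) p q = W u v p q + C ε * W u w p q := by
      intro p q
      simp only [W, Matrix.of_apply]
      ring
    funext n
    ext p q
    simp [coeffTuple, key]

lemma steps (m d k : ℕ) : ∀ a b, a + k ≤ d → b + k = d - a → d ≤ 2 * a →
    S m d (a + k) b ⊆ closure (S m d a (d - a)) := by
  induction k with
  | zero =>
    intro a b h1 h2 h3
    simp only [Nat.add_zero] at h2 ⊢
    rw [h2]
    exact subset_closure
  | succ k ih =>
    intro a b h1 h2 h3
    have := step m d (a + k) b (by omega)
    refine this.trans ?_
    refine closure_minimal ?_ isClosed_closure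
    exact ih a (b + 1) (by omega) (by omega) h3

lemma ev_ne (c : ℂ) : ∀ᶠ ε in nhdsWithin (0 : ℂ) {0}ᶜ, c + ε ≠ 0 := by
  by_cases hc : c = 0
  · filter_upwards [self_mem_nhdsWithin] with ε hε
    simpa [hc] using hε
  · refine nhdsWithin_le_nhds ?_
    have : Continuous fun ε : ℂ => c + ε := by fun_prop
    exact this.continuousAt.eventually_ne (by simpa using hc)

lemma cd_pert {m a : ℕ} (i₀ : Fin m) (u : Fin m → Polynomial ℂ) (hu : cd u ≤ a) (ε : ℂ)
    (hε : (u i₀).coeff a + ε ≠ 0) : cd (fun i => u i + C ε * X ^ a) = a := by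
  apply le_antisymm
  · rw [cd_le] at hu ⊢
    intro i
    refine Polynomial.natDegree_add_le_of_degree_le (hu i) ?_
    exact natDegree_C_mul_X_pow_le _ _
  · have h : a ≤ (u i₀ + C ε * X ^ a).natDegree :=
      Polynomial.le_natDegree_of_ne_zero (by simpa using hε)
    exact h.trans (Finset.le_sup (f := fun i => (u i + C ε * X ^ a).natDegree) (Finset.mem_univ i₀))

lemma S_sub_E (m d a b : ℕ) (i₀ : Fin m) : S m d a b ⊆ closure (E m d a b) := by
  rintro x ⟨u, v, hu, hv, rfl⟩
  have ht : Filter.Tendsto (fun ε : ℂ => coeffTuple m d (W u v) +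
        ε • (coeffTuple m d (W u (fun _ => X ^ b)) + coeffTuple m d (W (fun _ => X ^ a) v))
        + (ε ^ 2) • coeffTuple m d (W (fun _ => X ^ a) (fun _ => X ^ b)))
      (nhdsWithin 0 {0}ᶜ) (nhds (coeffTuple m d (W u v))) := by
    refine Filter.Tendsto.mono_left ?_ nhdsWithin_le_nhds
    refine Continuous.tendsto' (by fun_prop) _ _ (by simp)
  refine mem_closure_of_tendsto ht ?_
  filter_upwards [ev_ne ((u i₀).coeff a), ev_ne ((v i₀).coeff b)] with ε h1 h2
  refine ⟨_, _, cd_pert i₀ u hu ε h1, cd_pert i₀ v hv ε h2, ?_⟩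
  have key : ∀ p q, W (fun i => u i + C ε * X ^ a) (fun i => v i + C ε * X ^ b) p q
      = W u v p q + C ε * (W u (fun _ => X ^ b) p q + W (fun _ => X ^ a) v p q)
        + C (ε ^ 2) * W (fun _ => X ^ a) (fun _ => X ^ b) p q := by
    intro p q
    simp only [W, Matrix.of_apply, C_pow]
    ring
  funext n
  ext p q
  simp only [coeffTuple, key, Matrix.of_apply, coeff_add, coeff_C_mul, Pi.add_apply,
    Pi.smul_apply, Matrix.add_apply, Matrix.smul_apply, smul_eq_mul]

lemma sum_split (r : ℕ) (f : Fin (2 * r) → Polynomial ℂ) :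
    ∑ k, f k = ∑ i : Fin r, (f (Fin.castLE (by omega) i) + f (Fin.castLE (by omega) i).rev) := by
  have e : r + r = 2 * r := by omega
  rw [← Equiv.sum_comp (finCongr e) f, Fin.sum_univ_add, Finset.sum_add_distrib]
  congr 1
  rw [← Equiv.sum_comp Fin.revPerm]
  refine Finset.sum_congr rfl fun i _ => ?_
  congr 1
  ext
  simp
  omega

lemma LJL (m r : ℕ) (L : Matrix (Fin m) (Fin (2 * r)) (Polynomial ℂ)) :
    L * Jmat r * Lᵀ = ∑ i : Fin r, W (fun a => L a (Fin.castLE (by omega) i))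
      (fun a => L a (Fin.castLE (by omega) i).rev) := by
  have hJ : ∀ k l : Fin (2 * r), Jmat r k l =
      if k = l.rev then (if (l : ℕ) < r then -1 else 1) else 0 := by
    intro k l
    have hk := k.2
    have hl := l.2
    simp only [Jmat, Matrix.of_apply, Fin.ext_iff, Fin.val_rev]
    split_ifs <;> first | rfl | omega
  ext1 a b
  rw [Matrix.mul_apply, Matrix.sum_apply, sum_split]
  refine Finset.sum_congr rfl fun i _ => ?_
  have hi := i.2
  simp only [Matrix.mul_apply, hJ, W, Matrix.of_apply, Matrix.transpose_apply, mul_ite, mul_zero,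
    Finset.sum_ite_eq', Finset.sum_ite_eq, Finset.mem_univ, if_true, Fin.rev_rev]
  rw [if_pos (by simp), if_neg (by simp [Fin.val_rev]; omega)]
  ring

lemma coeffTuple_sum (m d r : ℕ) (f : Fin r → Matrix (Fin m) (Fin m) (Polynomial ℂ)) :
    coeffTuple m d (∑ i, f i) = ∑ i, coeffTuple m d (f i) := by
  funext n
  ext p q
  simp [coeffTuple, Matrix.sum_apply, Finset.sum_apply, Polynomial.finset_sum_coeff]

lemma sum_E (m r d c : ℕ) (x : Fin r → Fin (d + 1) → Matrix (Fin m) (Fin m) ℂ)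
    (hx : ∀ i, x i ∈ E m d c (d - c)) :
    ∑ i, x i ∈ coeffTuple m d '' Aset m r d fun _ => c := by
  choose u v hu hv h using hx
  let L : Matrix (Fin m) (Fin (2 * r)) (Polynomial ℂ) := Matrix.of fun a k =>
    if hk : (k : ℕ) < r then u ⟨k, hk⟩ a else v ⟨k.rev, by rw [Fin.val_rev]; omega⟩ a
  have h1 : ∀ (i : Fin r) a, L a (Fin.castLE (by omega) i) = u i a := by
    intro i a
    simp [L]
  have h2 : ∀ (i : Fin r) a, L a (Fin.castLE (by omega) i).rev = v i a := by
    intro i a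
    have hi := i.2
    simp only [L, Matrix.of_apply, Fin.rev_rev]
    rw [dif_neg (by simp [Fin.val_rev]; omega)]
    rfl
  refine ⟨L * Jmat r * Lᵀ, ⟨L, fun i => ⟨?_, ?_⟩, rfl⟩, ?_⟩
  · rw [← hu i]
    simp only [colDegree, h1, cd]
  · rw [← hv i]
    simp only [colDegree, h2, cd]
  · rw [LJL, coeffTuple_sum]
    refine Finset.sum_congr rfl fun i _ => ?_
    simp only [h1, h2]
    exact (h i).symm

end AuxA

/-- `A(d₁, …, d_r)` is contained in the closure (with respect to coefficientwise
convergence) of `A(⌈d/2⌉, …, ⌈d/2⌉)`. -/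
theorem Aset_subset_closure_Aset_ceil (m r d : ℕ)
    (hd : 1 ≤ d) (h2 : 2 ≤ 2 * r) (hrm : 2 * r ≤ m - 1)
    (ds : Fin r → ℕ) (hds : ∀ i, ds i ≤ d ∧ d ≤ 2 * ds i) :
    coeffTuple m d '' Aset m r d ds ⊆
      closure (coeffTuple m d '' Aset m r d fun _ => (d + 1) / 2) := by
  rintro _ ⟨_, ⟨L, hL, rfl⟩, rfl⟩
  rw [AuxA.LJL, AuxA.coeffTuple_sum]
  set c := (d + 1) / 2 with hc
  let x : Fin r → Fin (d + 1) → Matrix (Fin m) (Fin m) ℂ := fun i =>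
    coeffTuple m d (AuxA.W (fun a => L a (Fin.castLE (by omega) i))
      (fun a => L a (Fin.castLE (by omega) i).rev))
  have hx : ∀ i, x i ∈ closure (AuxA.E m d c (d - c)) := by
    intro i
    obtain ⟨ha, hb⟩ := hds i
    obtain ⟨k, hk⟩ : ∃ k, ds i = c + k := ⟨ds i - c, by omega⟩
    have hS : x i ∈ AuxA.S m d (c + k) (d - ds i) :=
      ⟨_, _, ((hL i).1.trans hk).le, (hL i).2.le, rfl⟩
    have h3 := AuxA.steps m d k c (d - ds i) (by omega) (by omega) (by omega) hS
    exact closure_minimal (AuxA.S_sub_E m d c (d - c) ⟨0, by omega⟩) isClosed_closure h3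
  have hpi : x ∈ closure (Set.univ.pi fun _ : Fin r => AuxA.E m d c (d - c)) := by
    rw [closure_pi_set]
    exact fun i _ => hx i
  have hcont : Continuous fun y : Fin r → Fin (d + 1) → Matrix (Fin m) (Fin m) ℂ => ∑ i, y i := by
    fun_prop
  have h4 := image_closure_subset_closure_image hcont (Set.mem_image_of_mem _ hpi)
  refine closure_mono ?_ h4
  rintro _ ⟨y, hy, rfl⟩
  exact AuxA.sum_E m r d c y fun i => hy i (Set.mem_univ i)
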